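/- Let n ≥ 1 be an integer, let K ⊆ ℝⁿ be a compact set with nonempty interior whose topological boundary has Lebesgue measure zero, let b : K → ℝ be continuous, let δ > 0, and let Q : ℝⁿ → ℝ be a positive definite quadratic form. Then lim_{T→∞} T^{n/2} e^{−δT} · ∫∫_{{(t,u) ∈ [0,∞)×ℝⁿ : √t·u ∈ K and t ≤ T + b(√t·u)}} e^{δt} e^{−Q(u)} dt du = (1/δ) ∫_K e^{δ b(u)} du, where the double integral is with respect to the product of Lebesgue measure on [0,∞) and Lebesgue measure on ℝⁿ. (This is the paper's Lemma on the main-term asymptotic of the local-mixing integral over a truncated tube.) -/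

import Mathlib

open MeasureTheory Real Filter Topology

theorem aux_cont {n : ℕ} (Q : QuadraticForm ℝ (EuclideanSpace ℝ (Fin n))) : Continuous Q := by
  have h : ∀ x, Q x = (QuadraticMap.associated (R := ℝ) Q).toContinuousBilinearMap x x := by
    intro x
    rw [LinearMap.toContinuousBilinearMap_apply]
    exact (QuadraticMap.associated_eq_self_apply ℝ Q x).symm
  have : (Q : EuclideanSpace ℝ (Fin n) → ℝ) = fun x =>
      (QuadraticMap.associated (R := ℝ) Q).toContinuousBilinearMap x x := funext h
  rw [this]
  fun_prop

theorem aux_lower {n : ℕ} (hn : 1 ≤ n) (Q : QuadraticForm ℝ (EuclideanSpace ℝ (Fin n)))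
    (hQ : ∀ u, u ≠ 0 → 0 < Q u) : ∃ c > 0, ∀ u, c * ‖u‖ ^ 2 ≤ Q u := by
  have : Nonempty (Fin n) := ⟨⟨0, hn⟩⟩
  have hne : (Metric.sphere (0 : EuclideanSpace ℝ (Fin n)) 1).Nonempty :=
    NormedSpace.sphere_nonempty.2 zero_le_one
  obtain ⟨v, hv, hmin⟩ := (isCompact_sphere (0 : EuclideanSpace ℝ (Fin n)) 1).exists_isMinOn hne
    (aux_cont Q).continuousOn
  have hv0 : v ≠ 0 := by
    rintro rfl
    simp at hv
  refine ⟨Q v, hQ v hv0, fun u => ?_⟩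
  by_cases hu : u = 0
  · simp [hu]
  have hu' : ‖u‖ ≠ 0 := by simpa using hu
  have h1 : Q v ≤ Q (‖u‖⁻¹ • u) := hmin (by simp [norm_smul, hu'])
  rw [QuadraticMap.map_smul] at h1
  simp only [smul_eq_mul] at h1
  have h2 := mul_le_mul_of_nonneg_right h1 (sq_nonneg ‖u‖)
  calc _ ≤ _ := h2
    _ = Q u := by field_simp

theorem aux_int {n : ℕ} (hn : 1 ≤ n) (Q : QuadraticForm ℝ (EuclideanSpace ℝ (Fin n)))
    (hQ : ∀ u, u ≠ 0 → 0 < Q u) : Integrable (fun u => Real.exp (-(Q u))) := by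
  obtain ⟨c, hc, h⟩ := aux_lower hn Q hQ
  have h1 : Integrable (fun u : EuclideanSpace ℝ (Fin n) => Real.exp (-c * ‖u‖ ^ 2)) := by
    by_contra hcon
    have h2 := GaussianFourier.integral_rexp_neg_mul_sq_norm (V := EuclideanSpace ℝ (Fin n)) hc
    rw [integral_undef hcon] at h2
    have : 0 < (π / c) ^ ((Module.finrank ℝ (EuclideanSpace ℝ (Fin n)) : ℝ) / 2) := by positivity
    linarith
  refine h1.mono' ?_ ?_
  · have := aux_cont Q
    exact (by fun_prop : Continuous fun u => Real.exp (-(Q u))).aestronglyMeasurable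
  · refine Eventually.of_forall fun u => ?_
    rw [Real.norm_of_nonneg (Real.exp_pos _).le]
    exact Real.exp_le_exp.2 (by linarith [h u])

/-- polynomial versus exponential -/
theorem aux_poly (n : ℕ) (δ : ℝ) (hδ : 0 < δ) : ∃ M, 0 < M ∧ ∀ s : ℝ,
    (1 + |s|) ^ ((n : ℝ) / 2) ≤ M * Real.exp (δ / 2 * |s|) := by
  obtain ⟨c, hc, hc1, hc2⟩ : ∃ c : ℝ, 0 < c ∧ c ≤ 1 ∧ c * n ≤ δ := by
    refine ⟨min 1 (δ / (n + 1)), by positivity, min_le_left _ _, ?_⟩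
    calc min 1 (δ / (n + 1)) * n ≤ δ / (n + 1) * (n + 1) := by
          gcongr
          · exact min_le_right _ _
          · linarith
      _ = δ := by field_simp
  refine ⟨(c⁻¹) ^ ((n : ℝ) / 2), by positivity, fun s => ?_⟩
  have h1 : 1 + |s| ≤ c⁻¹ * Real.exp (c * |s|) := by
    have h2 := Real.add_one_le_exp (c * |s|)
    rw [inv_mul_eq_div, le_div_iff₀ hc]
    nlinarith [abs_nonneg s]
  calc _ ≤ (c⁻¹ * Real.exp (c * |s|)) ^ ((n : ℝ) / 2) := by gcongr
    _ = c⁻¹ ^ ((n : ℝ) / 2) * Real.exp (c * |s| * (n / 2)) := by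
        rw [Real.mul_rpow (by positivity) (by positivity), ← Real.exp_mul]
    _ ≤ _ := by
        refine mul_le_mul_of_nonneg_left (Real.exp_le_exp.2 ?_) (by positivity)
        nlinarith [abs_nonneg s]

section
variable {n : ℕ}

/-- truncated tube -/
def auxS (K : Set (EuclideanSpace ℝ (Fin n))) (b : EuclideanSpace ℝ (Fin n) → ℝ) (T : ℝ) :
    Set (ℝ × EuclideanSpace ℝ (Fin n)) :=
  {p | 0 ≤ p.1 ∧ Real.sqrt p.1 • p.2 ∈ K ∧ p.1 ≤ T + b (Real.sqrt p.1 • p.2)}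

theorem auxS_meas {K : Set (EuclideanSpace ℝ (Fin n))} (hK : IsCompact K)
    {b : EuclideanSpace ℝ (Fin n) → ℝ} (hb : Measurable b) (T : ℝ) :
    MeasurableSet (auxS K b T) := by
  have hφ : Measurable fun p : ℝ × EuclideanSpace ℝ (Fin n) => Real.sqrt p.1 • p.2 :=
    (by fun_prop : Continuous _).measurable
  refine (measurableSet_le measurable_const measurable_fst).inter
    ((hφ hK.measurableSet).inter (measurableSet_le measurable_fst ?_))
  exact measurable_const.add (hb.comp hφ)

/-- integrand -/
noncomputable def auxF (K : Set (EuclideanSpace ℝ (Fin n))) (b : EuclideanSpace ℝ (Fin n) → ℝ)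
    (δ : ℝ) (Q : QuadraticForm ℝ (EuclideanSpace ℝ (Fin n))) (T : ℝ) :
    ℝ × EuclideanSpace ℝ (Fin n) → ℝ :=
  (auxS K b T).indicator fun p => Real.exp (δ * p.1) * Real.exp (-(Q p.2))

theorem auxF_meas {K : Set (EuclideanSpace ℝ (Fin n))} (hK : IsCompact K)
    {b : EuclideanSpace ℝ (Fin n) → ℝ} (hb : Measurable b) (δ : ℝ)
    (Q : QuadraticForm ℝ (EuclideanSpace ℝ (Fin n))) (T : ℝ) :
    Measurable (auxF K b δ Q T) := by
  have := aux_cont Q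
  exact Measurable.indicator (by fun_prop : Continuous _).measurable (auxS_meas hK hb T)

theorem auxF_nonneg (K : Set (EuclideanSpace ℝ (Fin n)))
    (b : EuclideanSpace ℝ (Fin n) → ℝ) (δ : ℝ)
    (Q : QuadraticForm ℝ (EuclideanSpace ℝ (Fin n))) (T : ℝ) (p) :
    0 ≤ auxF K b δ Q T p := Set.indicator_nonneg (fun _ _ => by positivity) _

theorem auxF_le (K : Set (EuclideanSpace ℝ (Fin n)))
    (b : EuclideanSpace ℝ (Fin n) → ℝ) (δ : ℝ)
    (Q : QuadraticForm ℝ (EuclideanSpace ℝ (Fin n))) (T : ℝ) (p) :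
    auxF K b δ Q T p ≤ Real.exp (δ * p.1) * Real.exp (-(Q p.2)) :=
  Set.indicator_le_self' (fun _ _ => by positivity) _

theorem auxF_zero {K : Set (EuclideanSpace ℝ (Fin n))}
    {b : EuclideanSpace ℝ (Fin n) → ℝ} {B : ℝ} (hB : ∀ u, b u ≤ B) (δ : ℝ)
    (Q : QuadraticForm ℝ (EuclideanSpace ℝ (Fin n))) (T : ℝ) (p)
    (hp : ¬ (0 ≤ p.1 ∧ p.1 ≤ T + B)) :
    auxF K b δ Q T p = 0 := by
  refine Set.indicator_of_notMem (fun h => hp ⟨h.1, h.2.2.trans ?_⟩) _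
  gcongr
  exact hB _

theorem auxF_int (hn : 1 ≤ n) {K : Set (EuclideanSpace ℝ (Fin n))} (hK : IsCompact K)
    {b : EuclideanSpace ℝ (Fin n) → ℝ} (hb : Measurable b) {B : ℝ} (hB : ∀ u, b u ≤ B)
    {δ : ℝ} (hδ : 0 < δ)
    (Q : QuadraticForm ℝ (EuclideanSpace ℝ (Fin n))) (hQ : ∀ u, u ≠ 0 → 0 < Q u) (T : ℝ) :
    Integrable (auxF K b δ Q T) (volume.prod volume) := by
  have h1 : Integrable ((Set.Iic (T + B)).indicator fun t => Real.exp (δ * t)) :=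
    (integrable_indicator_iff measurableSet_Iic).2 (integrableOn_exp_mul_Iic hδ _)
  refine (h1.mul_prod (aux_int hn Q hQ)).mono' (auxF_meas hK hb δ Q T).aestronglyMeasurable ?_
  refine Eventually.of_forall fun p => ?_
  rw [Real.norm_of_nonneg (auxF_nonneg ..)]
  by_cases hp : p.1 ≤ T + B
  · rw [Set.indicator_of_mem (by exact hp)]
    exact auxF_le ..
  · rw [auxF_zero hB _ _ _ _ (by tauto), Set.indicator_of_notMem (by exact hp), zero_mul]

/-- rescaled slice formula -/
theorem auxF_slice {K : Set (EuclideanSpace ℝ (Fin n))}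
    {b : EuclideanSpace ℝ (Fin n) → ℝ} (δ : ℝ)
    (Q : QuadraticForm ℝ (EuclideanSpace ℝ (Fin n))) (T s : ℝ) (h : 0 < s + T) :
    ∫ u, auxF K b δ Q T (s + T, u) = Real.exp (δ * (s + T)) * (((s + T) ^ ((n : ℝ) / 2))⁻¹ *
      ∫ w, (K ∩ {w | s ≤ b w}).indicator (fun w => Real.exp (-(Q w / (s + T)))) w) := by
  have h1 : ∀ u, auxF K b δ Q T (s + T, u) = Real.exp (δ * (s + T)) *
      (K ∩ {w | s ≤ b w}).indicator (fun w => Real.exp (-(Q w / (s + T))))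
        (Real.sqrt (s + T) • u) := by
    intro u
    have h2 : Q (Real.sqrt (s + T) • u) / (s + T) = Q u := by
      rw [QuadraticMap.map_smul, Real.mul_self_sqrt h.le, smul_eq_mul]
      field_simp
    by_cases hm : Real.sqrt (s + T) • u ∈ K ∩ {w | s ≤ b w}
    · have hm' : (s + T, u) ∈ auxS K b T :=
        ⟨h.le, hm.1, by have : s ≤ _ := hm.2; simp only; linarith⟩
      rw [Set.indicator_of_mem hm, h2, auxF, Set.indicator_of_mem hm']
    · have hm' : (s + T, u) ∉ auxS K b T := fun h' =>
        hm ⟨h'.2.1, by have := h'.2.2; simp only at this; simp only [Set.mem_ofPred_eq]; linarith⟩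
      rw [Set.indicator_of_notMem hm, auxF, Set.indicator_of_notMem hm', mul_zero]
  simp_rw [h1]
  rw [integral_const_mul, Measure.integral_comp_smul volume
    ((K ∩ {w | s ≤ b w}).indicator (fun w => Real.exp (-(Q w / (s + T)))))]
  congr 2
  rw [finrank_euclideanSpace_fin, abs_of_nonneg (by positivity), Real.sqrt_eq_rpow,
    ← Real.rpow_mul_natCast h.le]
  congr 2
  ring

theorem auxF_bound (hn : 1 ≤ n) {K : Set (EuclideanSpace ℝ (Fin n))} (hK : IsCompact K)
    {b : EuclideanSpace ℝ (Fin n) → ℝ} (hb : Measurable b) {B : ℝ} (hB : ∀ u, b u ≤ B)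
    {δ : ℝ} 
    (Q : QuadraticForm ℝ (EuclideanSpace ℝ (Fin n))) (hQ : ∀ u, u ≠ 0 → 0 < Q u) :
    ∃ C, 0 < C ∧ ∀ T s : ℝ, 0 ≤ T →
      T ^ ((n : ℝ) / 2) * ∫ u, auxF K b δ Q T (s + T, u) ≤
        Real.exp (δ * (s + T)) * (C * (1 + |s|) ^ ((n : ℝ) / 2)) := by
  have hQ0 : ∀ u, 0 ≤ Q u := by
    intro u
    by_cases hu : u = 0
    · simp [hu]
    · exact (hQ u hu).le
  obtain ⟨C, hC0, hC1, hC2⟩ : ∃ C : ℝ, 0 < C ∧ ∫ u, Real.exp (-(Q u)) ≤ C ∧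
      volume.real K ≤ C := by
    refine ⟨max 1 (max (∫ u, Real.exp (-(Q u))) (volume.real K)), by positivity, ?_, ?_⟩ <;> simp
  refine ⟨C * 2 ^ ((n : ℝ) / 2), by positivity, fun T s hT => ?_⟩
  have hTle : 0 ≤ s + T → T ≤ (1 + |s|) * (1 + (s + T)) := by
    intro h
    nlinarith [neg_abs_le s, abs_nonneg s]
  rcases lt_or_ge (s + T) 0 with h | h
  · have : ∀ u, auxF K b δ Q T (s + T, u) = 0 := fun u =>
      auxF_zero hB _ _ _ _ (by simp only; intro h'; linarith [h'.1])
    simp only [this, integral_zero, mul_zero]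
    positivity
  have hTp : T ^ ((n : ℝ) / 2) ≤ (1 + |s|) ^ ((n : ℝ) / 2) * (1 + (s + T)) ^ ((n : ℝ) / 2) := by
    rw [← Real.mul_rpow (by positivity) (by positivity)]
    exact Real.rpow_le_rpow hT (hTle h) (by positivity)
  have hnn : 0 ≤ ∫ u, auxF K b δ Q T (s + T, u) := integral_nonneg fun _ => auxF_nonneg ..
  suffices hs : (1 + (s + T)) ^ ((n : ℝ) / 2) * ∫ u, auxF K b δ Q T (s + T, u) ≤
      Real.exp (δ * (s + T)) * (C * 2 ^ ((n : ℝ) / 2)) by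
    calc _ ≤ (1 + |s|) ^ ((n : ℝ) / 2) * (1 + (s + T)) ^ ((n : ℝ) / 2) *
          ∫ u, auxF K b δ Q T (s + T, u) := by gcongr
      _ = (1 + |s|) ^ ((n : ℝ) / 2) * ((1 + (s + T)) ^ ((n : ℝ) / 2) *
          ∫ u, auxF K b δ Q T (s + T, u)) := by ring
      _ ≤ (1 + |s|) ^ ((n : ℝ) / 2) * (Real.exp (δ * (s + T)) * (C * 2 ^ ((n : ℝ) / 2))) := by
          gcongr
      _ = _ := by ring
  rcases le_or_gt (s + T) 1 with h1 | h1
  · have e1 : ∫ u, auxF K b δ Q T (s + T, u) ≤ Real.exp (δ * (s + T)) * C := by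
      calc _ ≤ ∫ u, Real.exp (δ * (s + T)) * Real.exp (-(Q u)) := by
            refine integral_mono_of_nonneg (Eventually.of_forall fun _ => auxF_nonneg ..)
              ((aux_int hn Q hQ).const_mul _) (Eventually.of_forall fun u => ?_)
            exact auxF_le K b δ Q T (s + T, u)
        _ = Real.exp (δ * (s + T)) * ∫ u, Real.exp (-(Q u)) := integral_const_mul _ _
        _ ≤ _ := by gcongr
    calc _ ≤ 2 ^ ((n : ℝ) / 2) * (Real.exp (δ * (s + T)) * C) := by
          gcongr
          linarith
      _ = _ := by ring
  · have h0 : 0 < s + T := by linarith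
    rw [auxF_slice δ Q T s h0]
    have e1 : ∫ w, (K ∩ {w | s ≤ b w}).indicator (fun w => Real.exp (-(Q w / (s + T)))) w ≤ C := by
      refine le_trans ?_ hC2
      rw [← integral_indicator_one hK.measurableSet]
      refine integral_mono_of_nonneg (Eventually.of_forall fun _ =>
        Set.indicator_nonneg (fun _ _ => by positivity) _)
        ((integrable_indicator_iff hK.measurableSet).2 
          (integrableOn_const hK.measure_lt_top.ne)) (Eventually.of_forall fun u => ?_)
      by_cases hu : u ∈ K
      · simp only [Set.indicator_of_mem hu]
        refine Set.indicator_le' (g := fun _ => (1 : ℝ)) (fun w _ => ?_) (fun _ _ => zero_le_one) u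
        rw [Real.exp_le_one_iff]
        have := hQ0 w
        simp only [Left.neg_nonpos_iff]
        positivity
      · simp [hu]
    have e0 : 0 ≤ ∫ w, (K ∩ {w | s ≤ b w}).indicator (fun w => Real.exp (-(Q w / (s + T)))) w :=
      integral_nonneg fun _ => Set.indicator_nonneg (fun _ _ => by positivity) _
    have e2 : (1 + (s + T)) ^ ((n : ℝ) / 2) ≤ 2 ^ ((n : ℝ) / 2) * (s + T) ^ ((n : ℝ) / 2) := by
      rw [← Real.mul_rpow (by positivity) (by positivity)]
      gcongr
      linarith
    have e3 : 0 < (s + T) ^ ((n : ℝ) / 2) := by positivity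
    calc _ ≤ (2 ^ ((n : ℝ) / 2) * (s + T) ^ ((n : ℝ) / 2)) * (Real.exp (δ * (s + T)) *
            (((s + T) ^ ((n : ℝ) / 2))⁻¹ * C)) := by gcongr
      _ = _ := by field_simp

theorem aux_pointwise {K : Set (EuclideanSpace ℝ (Fin n))} (hK : IsCompact K)
    {b : EuclideanSpace ℝ (Fin n) → ℝ} (hb : Measurable b) (δ : ℝ)
    (Q : QuadraticForm ℝ (EuclideanSpace ℝ (Fin n))) (hQ : ∀ u, u ≠ 0 → 0 < Q u) (s : ℝ) :
    Tendsto (fun T : ℝ => T ^ ((n : ℝ) / 2) * Real.exp (-δ * T) *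
      ∫ u, auxF K b δ Q T (s + T, u)) atTop
      (𝓝 (∫ w in K, (Set.Iic (b w)).indicator (fun s => Real.exp (δ * s)) s)) := by
  have hQ0 : ∀ u, 0 ≤ Q u := by
    intro u
    by_cases hu : u = 0
    · simp [hu]
    · exact (hQ u hu).le
  have hQc := aux_cont Q
  have hms : MeasurableSet {w | s ≤ b w} := measurableSet_le measurable_const hb
  have hm : MeasurableSet (K ∩ {w | s ≤ b w}) := hK.measurableSet.inter hms
  have hat : Tendsto (fun T : ℝ => s + T) atTop atTop := tendsto_atTop_add_const_left _ _ tendsto_id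
  have l1 : Tendsto (fun T : ℝ =>
      ∫ w, (K ∩ {w | s ≤ b w}).indicator (fun w => Real.exp (-(Q w / (s + T)))) w) atTop
      (𝓝 (∫ w, (K ∩ {w | s ≤ b w}).indicator (fun _ => (1 : ℝ)) w)) := by
    refine tendsto_integral_filter_of_dominated_convergence (K.indicator fun _ => (1 : ℝ)) ?_ ?_
      ((integrable_indicator_iff hK.measurableSet).2 (integrableOn_const hK.measure_lt_top.ne)) ?_
    · refine Eventually.of_forall fun T => (Measurable.indicator ?_ hm).aestronglyMeasurable
      exact (by fun_prop : Continuous _).measurable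
    · filter_upwards [hat.eventually_gt_atTop 0] with T hT
      refine Eventually.of_forall fun w => ?_
      rw [Real.norm_of_nonneg (Set.indicator_nonneg (fun _ _ => by positivity) _)]
      by_cases hu : w ∈ K
      · simp only [Set.indicator_of_mem hu]
        refine Set.indicator_le' (g := fun _ => (1 : ℝ)) (fun w _ => ?_) (fun _ _ => zero_le_one) w
        rw [Real.exp_le_one_iff]
        have := hQ0 w
        simp only [Left.neg_nonpos_iff]
        positivity
      · simp [hu]
    · refine Eventually.of_forall fun w => ?_
      by_cases hw : w ∈ K ∩ {w | s ≤ b w}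
      · simp only [Set.indicator_of_mem hw]
        have : Tendsto (fun T => Real.exp (-(Q w / (s + T)))) atTop (𝓝 (Real.exp (-0))) :=
          (Real.continuous_exp.tendsto _).comp (hat.const_div_atTop (Q w)).neg
        simpa using this
      · simp only [Set.indicator_of_notMem hw]
        exact tendsto_const_nhds
  have l2 : Tendsto (fun T : ℝ => (T / (s + T)) ^ ((n : ℝ) / 2)) atTop (𝓝 1) := by
    have : Tendsto (fun T : ℝ => T / (s + T)) atTop (𝓝 1) := by
      have h1 : Tendsto (fun T : ℝ => 1 - s / (s + T)) atTop (𝓝 (1 - 0)) :=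
        tendsto_const_nhds.sub (hat.const_div_atTop s)
      rw [sub_zero] at h1
      refine h1.congr' ?_
      filter_upwards [hat.eventually_gt_atTop 0] with T hT
      field_simp
      ring
    simpa using this.rpow_const (p := (n : ℝ) / 2) (Or.inl one_ne_zero)
  have l3 := ((l2.mul l1).const_mul (Real.exp (δ * s)))
  have e : Real.exp (δ * s) * (1 * ∫ w, (K ∩ {w | s ≤ b w}).indicator (fun _ => (1 : ℝ)) w) =
      ∫ w in K, (Set.Iic (b w)).indicator (fun s => Real.exp (δ * s)) s := by
    rw [one_mul, ← integral_const_mul, ← integral_indicator hK.measurableSet]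
    congr 1
    ext w
    by_cases h1 : w ∈ K <;> by_cases h2 : s ≤ b w <;> simp [h1, h2]
  rw [e] at l3
  refine l3.congr' ?_
  filter_upwards [hat.eventually_gt_atTop 0, eventually_gt_atTop 0] with T hT hT0
  rw [auxF_slice δ Q T s hT, Real.div_rpow hT0.le hT.le, mul_add, Real.exp_add]
  have : Real.exp (δ * T) * Real.exp (-δ * T) = 1 := by
    rw [← Real.exp_add]; simp
  rw [div_eq_mul_inv]
  linear_combination (- Real.exp (δ * s) * T ^ ((n : ℝ) / 2) * ((s + T) ^ ((n : ℝ) / 2))⁻¹ *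
    ∫ w, (K ∩ {w | s ≤ b w}).indicator (fun w => Real.exp (-(Q w / (s + T)))) w) * this

theorem aux_fubini {K : Set (EuclideanSpace ℝ (Fin n))} (hK : IsCompact K)
    {b : EuclideanSpace ℝ (Fin n) → ℝ} (hb : Measurable b) {B : ℝ} (hB : ∀ u, b u ≤ B)
    {δ : ℝ} (hδ : 0 < δ) :
    ∫ s, ∫ w in K, (Set.Iic (b w)).indicator (fun s => Real.exp (δ * s)) s =
      (1 / δ) * ∫ w in K, Real.exp (δ * b w) := by
  rw [integral_integral_swap]
  · rw [← integral_const_mul]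
    congr 1
    ext w
    rw [integral_indicator measurableSet_Iic, integral_exp_mul_Iic hδ]
    ring
  · have : IsFiniteMeasure (volume.restrict K) := ⟨by simpa using hK.measure_lt_top⟩
    have h1 : Integrable ((Set.Iic B).indicator fun t => Real.exp (δ * t)) :=
      (integrable_indicator_iff measurableSet_Iic).2 (integrableOn_exp_mul_Iic hδ _)
    refine (h1.mul_prod (integrable_const (μ := volume.restrict K) (1 : ℝ))).mono' ?_ ?_
    · have : Function.uncurry (fun s w => (Set.Iic (b w)).indicator (fun s => Real.exp (δ * s)) s) =
        {p : ℝ × EuclideanSpace ℝ (Fin n) | p.1 ≤ b p.2}.indicator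
          (fun p => Real.exp (δ * p.1)) := by
        ext ⟨s, w⟩
        simp [Set.indicator]
      rw [this]
      exact (Measurable.indicator (by fun_prop) (measurableSet_le measurable_fst
        (hb.comp measurable_snd))).aestronglyMeasurable
    · refine Eventually.of_forall fun ⟨s, w⟩ => ?_
      simp only [Function.uncurry, mul_one]
      rw [Real.norm_of_nonneg (Set.indicator_nonneg (fun _ _ => by positivity) _)]
      exact Set.indicator_le_indicator_of_subset (Set.Iic_subset_Iic.2 (hB w))
        (fun _ => by positivity) s

theorem aux_main (hn : 1 ≤ n) {K : Set (EuclideanSpace ℝ (Fin n))} (hK : IsCompact K)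
    {b : EuclideanSpace ℝ (Fin n) → ℝ} (hb : Measurable b) {B : ℝ} (hB : ∀ u, b u ≤ B)
    {δ : ℝ} (hδ : 0 < δ)
    (Q : QuadraticForm ℝ (EuclideanSpace ℝ (Fin n))) (hQ : ∀ u, u ≠ 0 → 0 < Q u) :
    Tendsto (fun T : ℝ => T ^ ((n : ℝ) / 2) * Real.exp (-δ * T) *
        ∫ p in auxS K b T, Real.exp (δ * p.1) * Real.exp (-(Q p.2)) ∂(volume.prod volume))
      atTop (𝓝 ((1 / δ) * ∫ u in K, Real.exp (δ * b u))) := by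
  have e1 : ∀ T : ℝ, T ^ ((n : ℝ) / 2) * Real.exp (-δ * T) *
      ∫ p in auxS K b T, Real.exp (δ * p.1) * Real.exp (-(Q p.2)) ∂(volume.prod volume) =
      ∫ s, T ^ ((n : ℝ) / 2) * Real.exp (-δ * T) * ∫ u, auxF K b δ Q T (s + T, u) := by
    intro T
    rw [← integral_indicator (auxS_meas hK hb T), integral_const_mul]
    congr 1
    change ∫ p, auxF K b δ Q T p ∂(volume.prod volume) = _
    rw [integral_prod _ (auxF_int hn hK hb hB hδ Q hQ T)]
    exact (integral_add_right_eq_self (fun t => ∫ u, auxF K b δ Q T (t, u)) T).symm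
  simp_rw [e1]
  rw [← aux_fubini hK hb hB hδ]
  obtain ⟨C, hC0, hC⟩ := auxF_bound hn hK hb hB (δ := δ) Q hQ
  obtain ⟨M, hM0, hM⟩ := aux_poly n δ hδ
  refine tendsto_integral_filter_of_dominated_convergence
    ((Set.Iic B).indicator fun s => C * M * Real.exp (δ * |B|) * Real.exp (δ / 2 * s)) ?_ ?_ ?_ ?_
  · refine Eventually.of_forall fun T => ?_
    have h1 : StronglyMeasurable fun t => ∫ u, auxF K b δ Q T (t, u) :=
      (auxF_meas hK hb δ Q T).stronglyMeasurable.integral_prod_right'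
    exact ((h1.comp_measurable (measurable_add_const T)).const_mul _).aestronglyMeasurable
  · filter_upwards [eventually_ge_atTop 0] with T hT
    refine Eventually.of_forall fun s => ?_
    have hnn : 0 ≤ ∫ u, auxF K b δ Q T (s + T, u) := integral_nonneg fun _ => auxF_nonneg ..
    rw [Real.norm_of_nonneg (by positivity)]
    by_cases hs : s ≤ B
    · rw [Set.indicator_of_mem (by exact hs)]
      have hsB : |s| ≤ -s + 2 * |B| := by
        rcases abs_cases s with h | h <;> linarith [le_abs_self B, abs_nonneg B]
      calc _ = Real.exp (-δ * T) * (T ^ ((n : ℝ) / 2) * ∫ u, auxF K b δ Q T (s + T, u)) := by ring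
        _ ≤ Real.exp (-δ * T) * (Real.exp (δ * (s + T)) * (C * (M * Real.exp (δ / 2 * |s|)))) := by
            refine mul_le_mul_of_nonneg_left ?_ (by positivity)
            refine (hC T s hT).trans ?_
            gcongr
            exact hM s
        _ = C * M * Real.exp (δ * s + δ / 2 * |s|) := by
            rw [mul_add δ s T, Real.exp_add, Real.exp_add]
            have : Real.exp (δ * T) * Real.exp (-δ * T) = 1 := by
              rw [← Real.exp_add]; simp
            linear_combination (C * M * Real.exp (δ * s) * Real.exp (δ / 2 * |s|)) * this
        _ ≤ C * M * Real.exp (δ * |B| + δ / 2 * s) := by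
            refine mul_le_mul_of_nonneg_left (Real.exp_le_exp.2 ?_) (by positivity)
            nlinarith
        _ = _ := by rw [Real.exp_add]; ring
    · rw [Set.indicator_of_notMem (by exact hs)]
      have : ∀ u, auxF K b δ Q T (s + T, u) = 0 := fun u =>
        auxF_zero hB _ _ _ _ (by simp only; intro h'; exact hs (by linarith [h'.2]))
      simp [this]
  · exact (integrable_indicator_iff measurableSet_Iic).2
      ((integrableOn_exp_mul_Iic (half_pos hδ) _).const_mul _)
  · exact Eventually.of_forall fun s => aux_pointwise hK hb δ Q hQ s

end

/-- Main-term asymptotic of the local-mixing integral over a truncated tube. -/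
theorem stmt_0 (n : ℕ) (hn : 1 ≤ n)
    (K : Set (EuclideanSpace ℝ (Fin n))) (hK : IsCompact K)
    (hKint : (interior K).Nonempty) (hKfr : volume (frontier K) = 0)
    (b : EuclideanSpace ℝ (Fin n) → ℝ) (hb : ContinuousOn b K)
    (δ : ℝ) (hδ : 0 < δ)
    (Q : QuadraticForm ℝ (EuclideanSpace ℝ (Fin n)))
    (hQ : ∀ u, u ≠ 0 → 0 < Q u) :
    Tendsto (fun T : ℝ =>
      T ^ ((n : ℝ) / 2) * Real.exp (-δ * T) *
        ∫ p in {p : ℝ × EuclideanSpace ℝ (Fin n) |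
            0 ≤ p.1 ∧ Real.sqrt p.1 • p.2 ∈ K ∧ p.1 ≤ T + b (Real.sqrt p.1 • p.2)},
          Real.exp (δ * p.1) * Real.exp (-(Q p.2)) ∂(volume.prod volume))
      atTop (𝓝 ((1 / δ) * ∫ u in K, Real.exp (δ * b u))) := by
  classical
  have hbm : Measurable (K.piecewise b fun _ => (0 : ℝ)) :=
    hb.measurable_piecewise continuousOn_const hK.measurableSet
  have heq : ∀ u ∈ K, K.piecewise b (fun _ => (0 : ℝ)) u = b u := fun u hu => by simp [hu]
  obtain ⟨B, hB⟩ : ∃ B, ∀ u, K.piecewise b (fun _ => (0 : ℝ)) u ≤ B := by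
    obtain ⟨B, hB⟩ := hK.exists_bound_of_continuousOn hb
    refine ⟨max B 0, fun u => ?_⟩
    by_cases hu : u ∈ K
    · rw [heq u hu]
      exact (le_abs_self _).trans ((hB u hu).trans (le_max_left _ _))
    · simp [hu]
  have key := aux_main hn hK hbm hB hδ Q hQ
  have e1 : ∫ u in K, Real.exp (δ * K.piecewise b (fun _ => (0 : ℝ)) u) =
      ∫ u in K, Real.exp (δ * b u) :=
    setIntegral_congr_fun hK.measurableSet fun u hu => by simp only [heq u hu]
  rw [e1] at key
  have e2 : ∀ T : ℝ, auxS K (K.piecewise b fun _ => (0 : ℝ)) T =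
      {p : ℝ × EuclideanSpace ℝ (Fin n) |
        0 ≤ p.1 ∧ Real.sqrt p.1 • p.2 ∈ K ∧ p.1 ≤ T + b (Real.sqrt p.1 • p.2)} := by
    intro T
    ext p
    simp only [auxS, Set.mem_ofPred_eq]
    refine and_congr_right fun _ => and_congr_right fun h => ?_
    rw [heq _ h]
  simp_rw [e2] at key
  exact key
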